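/- There exist an integer k ≥ 3 and a constant D < ∞ such that for every n ∈ ℕ there is a finite connected k-regular simple graph G with girth(G) ≥ n and c₁(G) ≤ D. (In other words, there is a sequence of k-regular graphs with indefinitely growing girths and uniformly bounded ℓ₁ distortions.) -/

import Mathlib

open SimpleGraph

noncomputable section
attribute [local instance] Classical.propDecidable

/-- The `ℓ₁`-distortion `c₁(G)` of a graph `G`, with vertices carrying the shortest path
metric: the infimum of all `C` for which there is a `C`-bilipschitz embedding
`φ : V(G) → ℓ₁`, i.e. some `r > 0` with
`r·d(u,v) ≤ ‖φ u - φ v‖₁ ≤ r·C·d(u,v)` for all vertices `u, v`. -/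
def l1Distortion {W : Type*} (G : SimpleGraph W) : ℝ :=
  sInf {C : ℝ | ∃ (φ : W → lp (fun _ : ℕ => ℝ) 1) (r : ℝ), 0 < r ∧
    ∀ u v : W, r * G.dist u v ≤ ‖φ u - φ v‖ ∧ ‖φ u - φ v‖ ≤ r * C * G.dist u v}

/-!
Let `G` be a finite graph whose diameter is at most its girth. A vertex of its `ZMod 2`-homology
cover is a vertex of `G` with a mod 2 chain of edges, and a walk in the cover moves the chain by the
set of edges its projection traverses an odd number of times. So the distance in the cover is at
least the Hamming distance of the chains. Conversely, let `s` be the chain of a walk in `G`: it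
splits into a path and edge-disjoint cycles, and each cycle can be reached from a fixed vertex by a
detour which is no longer than the cycle and, traversed back and forth, does not change the chain.
This gives a walk of length at most `3 * #s` with chain `s`. Hence the chain component embeds every
connected component of the cover into `ℓ₁` with distortion at most `3`.

Projecting a cycle of the cover gives a closed walk that uses each of its edges at least twice and
contains a cycle of `G`, so the girth of the cover is at least twice that of `G`. Iterating covers
produces regular graphs of large girth. To make the diameter at most the prescribed girth, take two
vertices at larger distance, delete them, and match their neighbours: this keeps degrees, does not
push the girth below the prescribed value, and terminates since the graph is finite.
-/

open scoped symmDiff Finset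

universe u

section Cycles

variable {V : Type*} {G : SimpleGraph V}

lemma egirth_le_length_add_one {x y : V} (h : G.Adj x y) (q : G.Walk y x)
    (hq : s(x, y) ∉ q.edges) : G.egirth ≤ q.length + 1 := by
  have hcycle : (Walk.cons h q.bypass).IsCycle :=
    (Walk.cons_isCycle_iff _ _).2
      ⟨q.bypass_isPath, fun he => hq (q.edges_bypass_subset_edges he)⟩
  calc G.egirth ≤ (Walk.cons h q.bypass).length := egirth_le_length hcycle
    _ ≤ q.length + 1 := by
      rw [Walk.length_cons]
      exact_mod_cast Nat.add_le_add_right q.length_bypass_le_length 1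

lemma mem_of_mem_edges_fromEdgeSet {E : Set (Sym2 V)} {x y : V} {w : (fromEdgeSet E).Walk x y}
    {e : Sym2 V} (he : e ∈ w.edges) : e ∈ E := by
  have := w.edges_subset_edgeSet he
  rw [edgeSet_fromEdgeSet] at this
  exact this.1

lemma exists_isCycle_edges_subset {E : Set (Sym2 V)} (hE : E ⊆ G.edgeSet)
    (h : ¬ (fromEdgeSet E).IsAcyclic) :
    ∃ (x : V) (c : G.Walk x x), c.IsCycle ∧ ∀ e ∈ c.edges, e ∈ E := by
  obtain ⟨x, c, hc⟩ : ∃ (x : V) (c : (fromEdgeSet E).Walk x x), c.IsCycle := by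
    simpa [IsAcyclic] using h
  have hmem : ∀ e ∈ c.edges, e ∈ E := fun _ => mem_of_mem_edges_fromEdgeSet
  exact ⟨x, c.transfer G fun e he => hE (hmem e he), hc.transfer _, by simpa using hmem⟩

lemma exists_isCycle_of_isChain_edges {a : V} (w : G.Walk a a) (hw : w.edges.IsChain (· ≠ ·))
    (hnil : ¬ w.Nil) : ∃ (x : V) (c : G.Walk x x), c.IsCycle ∧ c.edges ⊆ w.edges := by
  refine exists_isCycle_edges_subset (E := {e | e ∈ w.edges})
    (fun e he => w.edges_subset_edgeSet he) fun hacyclic => hnil ?_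
  have hE : ∀ e ∈ w.edges, e ∈ (fromEdgeSet {e | e ∈ w.edges}).edgeSet := fun e he => by
    rw [edgeSet_fromEdgeSet]
    exact ⟨he, G.not_isDiag_of_mem_edgeSet (w.edges_subset_edgeSet he)⟩
  have hpath : (w.transfer _ hE).IsPath :=
    (hacyclic.isPath_iff_isChain _).2 (by rwa [Walk.edges_transfer])
  rw [← Walk.length_eq_zero_iff, ← Walk.length_transfer w hE, Walk.length_eq_zero_iff]
  exact Walk.isPath_iff_nil.1 hpath

end Cycles

section Covering

variable {V W : Type*} {G : SimpleGraph V} {H : SimpleGraph W} {f : H →g G}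

/-- A covering map of graphs: a homomorphism that maps the neighbourhood of every vertex
bijectively onto the neighbourhood of its image. Surjectivity on vertices is not required. -/
def IsCovering (f : H →g G) : Prop :=
  ∀ x, Set.BijOn f (H.neighborSet x) (G.neighborSet (f x))

namespace IsCovering

lemma isRegularOfDegree [LocallyFinite G] [LocallyFinite H] (hf : IsCovering f) {k : ℕ}
    (hG : G.IsRegularOfDegree k) : H.IsRegularOfDegree k := fun x => by
  rw [← hG (f x), ← card_neighborSet_eq_degree, ← card_neighborSet_eq_degree]
  exact Fintype.card_congr (hf x).equiv

lemma isChain_edges_map (hf : IsCovering f) {a b : W} (p : H.Walk a b)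
    (h : p.edges.IsChain (· ≠ ·)) : (p.map f).edges.IsChain (· ≠ ·) := by
  induction p with
  | nil => simp
  | @cons u v w huv q ih =>
    cases q with
    | nil => simp
    | @cons _ z _ hvz q =>
      simp only [Walk.map_cons, Walk.edges_cons, List.isChain_cons_cons] at h ih ⊢
      refine ⟨fun he => h.1 ?_, ih h.2⟩
      have hfuz : f u = f z := Sym2.congr_right.1 (Sym2.eq_swap.trans he)
      rw [(hf v).injOn huv.symm hvz hfuz, Sym2.eq_swap]

lemma exists_isCycle_edges_subset_map (hf : IsCovering f) {a : W} {c : H.Walk a a}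
    (hc : c.IsCycle) : ∃ (x : V) (d : G.Walk x x), d.IsCycle ∧ d.edges ⊆ (c.map f).edges := by
  refine exists_isCycle_of_isChain_edges _ (hf.isChain_edges_map c hc.edges_nodup.isChain) ?_
  rw [← Walk.length_eq_zero_iff, Walk.length_map]
  exact (zero_lt_three.trans_le hc.three_le_length).ne'

end IsCovering

lemma isCovering_toSimpleGraph_hom (C : G.ConnectedComponent) :
    IsCovering C.toSimpleGraph_hom := fun x =>
  ⟨fun _ hy => hy, fun _ _ _ _ h => Subtype.ext h,
    fun y hy => ⟨⟨y, C.mem_supp_of_adj_mem_supp x.2 hy⟩, hy, rfl⟩⟩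

lemma dist_toSimpleGraph (C : G.ConnectedComponent) (x y : C) :
    C.toSimpleGraph.dist x y = G.dist x y := by
  apply le_antisymm
  · obtain ⟨w, hw⟩ := (C.reachable_of_mem_supp x.2 y.2).exists_walk_length_eq_dist
    have hsupp : ∀ z ∈ w.support, z ∈ C.supp := fun z hz =>
      (ConnectedComponent.sound (w.takeUntil z hz).reachable.symm).trans x.2
    have hlength : (w.induce C.supp hsupp).length = w.length := by
      rw [← Walk.length_map (Embedding.induce C.supp).toHom, Walk.map_induce]
      rfl
    rw [← hw, ← hlength]
    exact dist_le (w.induce C.supp hsupp)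
  · obtain ⟨w, hw⟩ := C.connected_toSimpleGraph.exists_walk_length_eq_dist x y
    rw [← hw, ← Walk.length_map C.toSimpleGraph_hom]
    exact dist_le (w.map C.toSimpleGraph_hom)

end Covering

section OddEdges

variable {V : Type*} {G : SimpleGraph V} {a b c : V}

/-- The mod 2 chain of a walk: the set of edges traversed an odd number of times. Chains with
coefficients in `ZMod 2` are encoded as finite sets of edges, their sum being `∆`. -/
def oddEdges (p : G.Walk a b) : Finset (Sym2 V) :=
  {e ∈ p.edges.toFinset | Odd (p.edges.count e)}

lemma mem_oddEdges {p : G.Walk a b} {e : Sym2 V} :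
    e ∈ oddEdges p ↔ Odd (p.edges.count e) := by
  rw [oddEdges, Finset.mem_filter, List.mem_toFinset, and_iff_right_iff_imp]
  exact fun h => List.count_pos_iff.1 h.pos

lemma mem_edges_of_mem_oddEdges {p : G.Walk a b} {e : Sym2 V} (h : e ∈ oddEdges p) :
    e ∈ p.edges :=
  List.count_pos_iff.1 (mem_oddEdges.1 h).pos

@[simp]
lemma oddEdges_nil : oddEdges (Walk.nil : G.Walk a a) = ∅ := rfl

lemma oddEdges_append (p : G.Walk a b) (q : G.Walk b c) :
    oddEdges (p.append q) = oddEdges p ∆ oddEdges q := by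
  ext e
  simp only [Finset.mem_symmDiff, mem_oddEdges, Walk.edges_append, List.count_append, Nat.odd_add,
    ← Nat.not_odd_iff_even]
  tauto

lemma oddEdges_reverse (p : G.Walk a b) : oddEdges p.reverse = oddEdges p := by
  ext e
  simp only [mem_oddEdges, Walk.edges_reverse, List.count_reverse]

lemma oddEdges_rotate (p : G.Walk a a) (hb : b ∈ p.support) :
    oddEdges (p.rotate b hb) = oddEdges p := by
  ext e
  rw [mem_oddEdges, mem_oddEdges, (p.rotate_edges b hb).perm.count_eq]

lemma oddEdges_of_isTrail {p : G.Walk a b} (hp : p.IsTrail) :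
    oddEdges p = p.edges.toFinset := by
  refine Finset.filter_true_of_mem fun e he => ?_
  rw [List.count_eq_one_of_mem hp.edges_nodup (List.mem_toFinset.1 he)]
  exact odd_one

lemma card_oddEdges_of_isTrail {p : G.Walk a b} (hp : p.IsTrail) :
    #(oddEdges p) = p.length := by
  rw [oddEdges_of_isTrail hp, List.toFinset_card_of_nodup hp.edges_nodup, Walk.length_edges]

lemma oddEdges_cons (h : G.Adj a b) (p : G.Walk b c) :
    oddEdges (Walk.cons h p) = {s(a, b)} ∆ oddEdges p := by
  rw [← Walk.nil_append p, ← Walk.cons_append, oddEdges_append, Walk.nil_append,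
    oddEdges_of_isTrail (by simp)]
  simp

lemma card_oddEdges_le_length (p : G.Walk a b) : #(oddEdges p) ≤ p.length :=
  calc #(oddEdges p) ≤ #p.edges.toFinset := Finset.card_filter_le _ _
    _ ≤ p.length := p.length_edges ▸ p.edges.toFinset_card_le

/-- The coboundary of a `ZMod 2`-valued function on the vertices. -/
def coboundary (h : V → ZMod 2) : Sym2 V → ZMod 2 :=
  Sym2.lift ⟨fun x y => h x + h y, fun _ _ => add_comm _ _⟩

lemma sum_coboundary_edges (h : V → ZMod 2) (p : G.Walk a b) :
    (p.edges.map (coboundary h)).sum = h a + h b := by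
  induction p with
  | nil => simp [CharTwo.add_self_eq_zero]
  | @cons x y z hxy p ih =>
    rw [Walk.edges_cons, List.map_cons, List.sum_cons, ih]
    change h x + h y + (h y + h z) = h x + h z
    rw [add_assoc, CharTwo.add_cancel_left]

lemma sum_coboundary_oddEdges (h : V → ZMod 2) (p : G.Walk a b) :
    ∑ e ∈ oddEdges p, coboundary h e = h a + h b := by
  rw [← sum_coboundary_edges h p, Finset.sum_list_map_count, oddEdges, Finset.sum_filter]
  refine Finset.sum_congr rfl fun e _ => ?_
  rw [nsmul_eq_mul]
  split_ifs with he
  · rw [(ZMod.natCast_eq_one_iff_odd).2 he, one_mul]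
  · rw [(ZMod.natCast_eq_zero_iff_even).2 (Nat.not_odd_iff_even.1 he), zero_mul]

lemma reachable_fromEdgeSet_oddEdges (p : G.Walk a b) :
    (fromEdgeSet (oddEdges p : Set (Sym2 V))).Reachable a b := by
  set H := fromEdgeSet (oddEdges p : Set (Sym2 V))
  -- The coboundary of the indicator of the component of `a` vanishes on the chain of `p`.
  let h : V → ZMod 2 := fun x => if H.Reachable a x then 1 else 0
  have hconst : ∀ e ∈ oddEdges p, coboundary h e = 0 := by
    rintro ⟨x, y⟩ he
    have hadj : H.Adj x y := (fromEdgeSet_adj _).2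
      ⟨he, (p.adj_of_mem_edges (mem_edges_of_mem_oddEdges he)).ne⟩
    have hiff : H.Reachable a x ↔ H.Reachable a y :=
      ⟨fun hx => hx.trans hadj.reachable, fun hy => hy.trans hadj.symm.reachable⟩
    change (if H.Reachable a x then (1 : ZMod 2) else 0) + (if H.Reachable a y then 1 else 0) = 0
    simp only [hiff, CharTwo.add_self_eq_zero]
  have hab : h a = h b := by
    rw [← CharTwo.add_eq_zero, ← sum_coboundary_oddEdges, Finset.sum_eq_zero hconst]
  by_contra hb
  simp [h, hb] at hab

lemma exists_isTrail_oddEdges_subset (p : G.Walk a b) :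
    ∃ q : G.Walk a b, q.IsTrail ∧ oddEdges q ⊆ oddEdges p := by
  obtain ⟨q, hq⟩ := (reachable_fromEdgeSet_oddEdges p).exists_isPath
  have hmem : ∀ e ∈ q.edges, e ∈ oddEdges p := fun _ => mem_of_mem_edges_fromEdgeSet
  refine ⟨q.transfer G fun e he => p.edges_subset_edgeSet (mem_edges_of_mem_oddEdges (hmem e he)),
    (hq.transfer _).isTrail, fun e he => hmem e ?_⟩
  simpa using mem_edges_of_mem_oddEdges he

lemma exists_isCycle_oddEdges_subset (p : G.Walk a a) (hp : (oddEdges p).Nonempty) :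
    ∃ (x : V) (c : G.Walk x x), c.IsCycle ∧ oddEdges c ⊆ oddEdges p := by
  obtain ⟨⟨x, y⟩, he⟩ := hp
  have hxy : G.Adj x y := p.adj_of_mem_edges (mem_edges_of_mem_oddEdges he)
  have hx : x ∈ p.support := p.fst_mem_support_of_mem_edges (mem_edges_of_mem_oddEdges he)
  let E := (oddEdges p : Set (Sym2 V))
  have hdel : ((fromEdgeSet E).deleteEdges {s(x, y)}).Reachable x y := by
    have := reachable_fromEdgeSet_oddEdges (Walk.cons hxy.symm (p.rotate x hx))
    rw [oddEdges_cons, oddEdges_rotate, Sym2.eq_swap (a := y)] at this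
    refine this.symm.mono fun u v huv => ?_
    simp only [fromEdgeSet_adj, Finset.mem_coe, Finset.mem_symmDiff, Finset.mem_singleton,
      deleteEdges_adj, Set.mem_singleton_iff, E] at huv ⊢
    grind
  obtain ⟨u, c, hc, -⟩ := adj_and_reachable_delete_edges_iff_exists_cycle.1
    ⟨(fromEdgeSet_adj _).2 ⟨he, hxy.ne⟩, hdel⟩
  obtain ⟨z, d, hd, hdE⟩ := exists_isCycle_edges_subset (E := E)
    (fun e he => p.edges_subset_edgeSet (mem_edges_of_mem_oddEdges he)) fun h => h c hc
  exact ⟨z, d, hd, fun e he => hdE e (mem_edges_of_mem_oddEdges he)⟩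

lemma card_symmDiff_oddEdges_add_length {s : Finset (Sym2 V)} {q : G.Walk a b} (hq : q.IsTrail)
    (hs : oddEdges q ⊆ s) : #(s ∆ oddEdges q) + q.length = #s := by
  rw [← card_oddEdges_of_isTrail hq, symmDiff_of_ge hs, Finset.card_sdiff_add_card_eq_card hs]

lemma exists_walk_length_le_mul_of_isCycle {K : ℕ} (hK : G.ediam ≤ K * G.egirth) (a : V) {x : V}
    {c : G.Walk x x} (hc : c.IsCycle) : ∃ r : G.Walk a x, r.length ≤ K * c.length := by
  have hle : G.edist a x ≤ (K * c.length : ℕ) := calc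
    G.edist a x ≤ G.ediam := edist_le_ediam
    _ ≤ K * G.egirth := hK
    _ ≤ (K * c.length : ℕ) := by
      rw [Nat.cast_mul]
      gcongr
      exact egirth_le_length hc
  obtain ⟨r, hr⟩ := exists_walk_of_edist_ne_top
    (hle.trans_lt (ENat.natCast_lt_top _)).ne
  exact ⟨r, by rw [← hr] at hle; exact_mod_cast hle⟩

lemma exists_closed_walk_oddEdges_eq {K : ℕ} (hK : G.ediam ≤ K * G.egirth) (p : G.Walk a a) :
    ∃ q : G.Walk a a, oddEdges q = oddEdges p ∧ q.length ≤ (2 * K + 1) * #(oddEdges p) := by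
  induction h : #(oddEdges p) using Nat.strong_induction_on generalizing p with
  | _ n ih =>
    subst h
    obtain hempty | hne := (oddEdges p).eq_empty_or_nonempty
    · exact ⟨Walk.nil, by rw [hempty, oddEdges_nil], by simp⟩
    obtain ⟨x, c, hc, hcp⟩ := exists_isCycle_oddEdges_subset p hne
    obtain ⟨r, hr⟩ := exists_walk_length_le_mul_of_isCycle hK a hc
    let loop := r.append (c.append r.reverse)
    have hloop : oddEdges loop = oddEdges c := by
      simp only [loop, oddEdges_append, oddEdges_reverse]
      rw [symmDiff_comm (oddEdges c), symmDiff_symmDiff_cancel_left]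
    have hsub : oddEdges (p.append loop) = oddEdges p ∆ oddEdges c := by
      rw [oddEdges_append, hloop]
    have hcard := card_symmDiff_oddEdges_add_length hc.isTrail hcp
    have hpos := hc.three_le_length
    rw [← hsub] at hcard
    obtain ⟨q, hq, hqlen⟩ := ih _ (by omega) (p.append loop) rfl
    refine ⟨q.append loop, ?_, ?_⟩
    · rw [oddEdges_append, hq, hsub, hloop, symmDiff_symmDiff_cancel_right]
    · calc (q.append loop).length = q.length + (2 * r.length + c.length) := by
            simp only [loop, Walk.length_append, Walk.length_reverse]; ring
        _ ≤ (2 * K + 1) * #(oddEdges (p.append loop)) + (2 * (K * c.length) + c.length) := by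
            gcongr
        _ = (2 * K + 1) * #(oddEdges p) := by rw [← hcard]; ring

lemma exists_walk_oddEdges_eq {K : ℕ} (hK : G.ediam ≤ K * G.egirth) (p : G.Walk a b) :
    ∃ q : G.Walk a b, oddEdges q = oddEdges p ∧ q.length ≤ (2 * K + 1) * #(oddEdges p) := by
  obtain ⟨t, ht, htp⟩ := exists_isTrail_oddEdges_subset p
  have hcard := card_symmDiff_oddEdges_add_length ht htp
  obtain ⟨q, hq, hqlen⟩ := exists_closed_walk_oddEdges_eq hK (p.append t.reverse)
  rw [oddEdges_append, oddEdges_reverse] at hq hqlen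
  refine ⟨q.append t, ?_, ?_⟩
  · rw [oddEdges_append, hq, symmDiff_symmDiff_cancel_right]
  · rw [Walk.length_append, ← hcard, mul_add]
    exact Nat.add_le_add hqlen (Nat.le_mul_of_pos_left _ (by positivity))

end OddEdges

section HomologyCover

variable {V : Type*} {G : SimpleGraph V}

/-- The `ZMod 2`-homology cover of `G`: a vertex is a vertex of `G` together with a mod 2 chain,
and crossing an edge adds that edge to the chain. All chains are allowed, so this graph is a
disjoint union of copies of the usual (connected) homology cover. -/
def homologyCover (G : SimpleGraph V) : SimpleGraph (V × Finset (Sym2 V)) where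
  Adj x y := G.Adj x.1 y.1 ∧ y.2 = {s(x.1, y.1)} ∆ x.2
  symm := ⟨fun x y h => ⟨h.1.symm, by rw [h.2, Sym2.eq_swap, symmDiff_symmDiff_cancel_left]⟩⟩
  loopless := ⟨fun x h => G.loopless.irrefl _ h.1⟩

namespace homologyCover

/-- The projection of the homology cover onto its base graph. -/
def proj (G : SimpleGraph V) : homologyCover G →g G := ⟨Prod.fst, And.left⟩

lemma isCovering_proj : IsCovering (proj G) := fun x =>
  ⟨fun _ hy => hy.1,
    fun y hy z hz hyz => Prod.ext hyz (by
      rw [hy.2, hz.2]; exact congrArg (fun v => {s(x.1, v)} ∆ x.2) hyz),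
    fun y hy => ⟨(y, {s(x.1, y)} ∆ x.2), ⟨hy, rfl⟩, rfl⟩⟩

lemma oddEdges_map_proj {x y : V × Finset (Sym2 V)} (w : (homologyCover G).Walk x y) :
    oddEdges (w.map (proj G)) = x.2 ∆ y.2 := by
  induction w with
  | nil => simp
  | @cons x y z h w ih =>
    rw [Walk.map_cons, oddEdges_cons, ih, ← symmDiff_assoc, h.2]
    exact congrArg (· ∆ z.2) (symmDiff_symmDiff_cancel_left _ _)

lemma exists_walk_lift {a b : V} (q : G.Walk a b) (s : Finset (Sym2 V)) :
    ∃ w : (homologyCover G).Walk (a, s) (b, oddEdges q ∆ s), w.length = q.length := by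
  induction q generalizing s with
  | nil =>
    have hend : ∅ ∆ s = s := bot_symmDiff s
    rw [oddEdges_nil, hend]
    exact ⟨Walk.nil, rfl⟩
  | @cons a b c h q ih =>
    obtain ⟨w, hw⟩ := ih ({s(a, b)} ∆ s)
    have hend : oddEdges (Walk.cons h q) ∆ s = oddEdges q ∆ ({s(a, b)} ∆ s) := by
      rw [oddEdges_cons, symmDiff_comm {s(a, b)}, symmDiff_assoc]
    rw [hend]
    have hadj : (homologyCover G).Adj (a, s) (b, {s(a, b)} ∆ s) := ⟨h, rfl⟩
    exact ⟨Walk.cons hadj w, by rw [Walk.length_cons, Walk.length_cons, hw]⟩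

lemma two_mul_egirth_le : 2 * G.egirth ≤ (homologyCover G).egirth := by
  refine le_egirth.2 fun x c hc => ?_
  set p := c.map (proj G)
  have hodd : oddEdges p = ∅ := by rw [oddEdges_map_proj, symmDiff_self]; rfl
  obtain ⟨y, d, hd, hdp⟩ := isCovering_proj.exists_isCycle_edges_subset_map hc
  -- The chain of `p` is zero, so `p` traverses each of its edges at least twice.
  have htwice : (d.edges ++ d.edges).Subperm p.edges := by
    refine List.subperm_ext_iff.2 fun e he => ?_
    have hed : e ∈ d.edges := by simpa using he
    have hpos : 0 < p.edges.count e := List.count_pos_iff.2 (hdp hed)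
    have heven : ¬ Odd (p.edges.count e) := by
      rw [← mem_oddEdges, hodd]
      exact Finset.notMem_empty e
    rw [List.count_append, List.count_eq_one_of_mem hd.edges_nodup hed]
    grind
  have hlength : 2 * d.length ≤ c.length := by
    simpa [p, two_mul] using htwice.length_le
  calc 2 * G.egirth ≤ 2 * d.length := by gcongr; exact egirth_le_length hd
    _ ≤ c.length := by exact_mod_cast hlength

variable {x y : V × Finset (Sym2 V)}

lemma card_symmDiff_le_dist (hxy : (homologyCover G).Reachable x y) :
    #(x.2 ∆ y.2) ≤ (homologyCover G).dist x y := by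
  obtain ⟨w, hw⟩ := hxy.exists_walk_length_eq_dist
  rw [← oddEdges_map_proj w, ← hw, ← Walk.length_map (proj G)]
  exact card_oddEdges_le_length _

lemma dist_le_mul_card_symmDiff {K : ℕ} (hK : G.ediam ≤ K * G.egirth)
    (hxy : (homologyCover G).Reachable x y) :
    (homologyCover G).dist x y ≤ (2 * K + 1) * #(x.2 ∆ y.2) := by
  obtain ⟨w⟩ := hxy
  obtain ⟨q, hq, hqlen⟩ := exists_walk_oddEdges_eq hK (w.map (proj G))
  rw [oddEdges_map_proj] at hq hqlen
  obtain ⟨w', hw'⟩ := exists_walk_lift q x.2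
  have hend : oddEdges q ∆ x.2 = y.2 := by
    rw [hq, symmDiff_comm, symmDiff_symmDiff_cancel_left]
  calc (homologyCover G).dist x y
      = (homologyCover G).dist ((proj G) x, x.2) ((proj G) y, oddEdges q ∆ x.2) := by
        rw [hend]; rfl
    _ ≤ w'.length := dist_le w'
    _ ≤ (2 * K + 1) * #(x.2 ∆ y.2) := hw' ▸ hqlen

end homologyCover

end HomologyCover

section LargeGirth

lemma exists_isRegularOfDegree_le_egirth (k n : ℕ) :
    ∃ (V : Type) (_ : Fintype V) (_ : Nonempty V) (G : SimpleGraph V),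
      G.IsRegularOfDegree k ∧ (n : ℕ∞) ≤ G.egirth := by
  induction n with
  | zero =>
    refine ⟨Fin (k + 1), inferInstance, inferInstance, ⊤, ?_, by simp⟩
    convert IsRegularOfDegree.top (V := Fin (k + 1))
    simp
  | succ n ih =>
    obtain ⟨V, _, _, G, hreg, hn⟩ := ih
    refine ⟨V × Finset (Sym2 V), inferInstance, inferInstance, homologyCover G,
      homologyCover.isCovering_proj.isRegularOfDegree hreg, ?_⟩
    calc ((n + 1 : ℕ) : ℕ∞) ≤ G.egirth + G.egirth := by
          push_cast
          exact add_le_add hn ((by norm_num : (1 : ℕ∞) ≤ 3).trans G.three_le_egirth)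
      _ = 2 * G.egirth := (two_mul _).symm
      _ ≤ (homologyCover G).egirth := homologyCover.two_mul_egirth_le

end LargeGirth

section Matching

variable {V : Type*} {G M : SimpleGraph V}

lemma exists_walk_notMem_edges_of_isTrail {a x y : V} {c : G.Walk a a} (hc : c.IsTrail)
    (h : s(x, y) ∈ c.edges) :
    ∃ q : G.Walk y x, s(x, y) ∉ q.edges ∧ q.length + 1 = c.length := by
  wlog hd : ∃ hxy : G.Adj x y, ⟨(x, y), hxy⟩ ∈ c.darts generalizing x y
  · obtain ⟨d, hdc, hdxy⟩ := List.mem_map.1 h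
    obtain hdxy | hdxy := dart_edge_eq_mk'_iff'.1 hdxy
    · obtain ⟨⟨x, y⟩, hxy⟩ := d
      obtain ⟨rfl, rfl⟩ := hdxy
      exact (hd ⟨hxy, hdc⟩).elim
    · obtain ⟨⟨y, x⟩, hyx⟩ := d
      obtain ⟨rfl, rfl⟩ := hdxy
      obtain ⟨q, hq, hlen⟩ := this (Sym2.eq_swap ▸ h) ⟨hyx, hdc⟩
      exact ⟨q.reverse, by simpa [Sym2.eq_swap] using hq, by simpa using hlen⟩
  obtain ⟨hxy, hd⟩ := hd
  obtain ⟨p, q, hpq⟩ := (Walk.isSubwalk_toWalk_iff_mem_darts c hxy).2 hd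
  have hedges : c.edges = p.edges ++ s(x, y) :: q.edges := by simp [hpq]
  have hnodup : (s(x, y) :: (p.edges ++ q.edges)).Nodup := by
    rw [← List.nodup_middle, ← hedges]
    exact hc.edges_nodup
  refine ⟨q.append p, ?_, ?_⟩
  · rw [Walk.edges_append, List.mem_append, or_comm, ← List.mem_append]
    exact (List.nodup_cons.1 hnodup).1
  · simp only [hpq, Walk.length_append, Adj.length_toWalk]
    ring

lemma edist_le_length_or_exists_adj {x y : V} (q : (G ⊔ M).Walk y x) :
    G.edist y x ≤ q.length ∨
      ∃ z w, M.Adj z w ∧ s(z, w) ∈ q.edges ∧ G.edist y z + 1 ≤ q.length := by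
  induction q with
  | nil => simp
  | @cons y t x h q ih =>
    obtain hG | hM := h
    · have hstep (z : V) : G.edist y z ≤ G.edist t z + 1 := by
        rw [add_comm, ← edist_eq_one_iff_adj.2 hG]
        exact SimpleGraph.edist_triangle
      rw [Walk.length_cons, Nat.cast_add, Nat.cast_one]
      refine ih.imp (fun hx => (hstep x).trans (by gcongr)) ?_
      rintro ⟨z, w, hzw, hmem, hz⟩
      exact ⟨z, w, hzw, List.mem_cons_of_mem _ hmem, by gcongr; exact (hstep z).trans hz⟩
    · exact Or.inr ⟨y, t, hM, by simp, by simp⟩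

lemma le_egirth_sup {g : ℕ∞} (hG : g ≤ G.egirth)
    (hM : ∀ ⦃x y z⦄, M.Adj x y → M.Adj x z → y = z)
    (hfar : M.support.Pairwise fun x y => g ≤ G.edist x y + 2)
    (hadj : ∀ ⦃x y⦄, M.Adj x y → g ≤ G.edist x y + 1) : g ≤ (G ⊔ M).egirth := by
  refine le_egirth.2 fun a c hc => ?_
  by_cases hcG : ∀ e ∈ c.edges, e ∈ G.edgeSet
  · rw [← Walk.length_transfer c hcG]
    exact hG.trans (egirth_le_length (hc.transfer hcG))
  obtain ⟨⟨x, y⟩, he, hxyG⟩ : ∃ e ∈ c.edges, e ∉ G.edgeSet := by simpa using hcG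
  have hxy : M.Adj x y := (c.adj_of_mem_edges he).resolve_left hxyG
  obtain ⟨q, hq, hlen⟩ := exists_walk_notMem_edges_of_isTrail hc.isTrail he
  rw [← hlen, Nat.cast_add, Nat.cast_one]
  obtain hyx | ⟨z, w, hzw, hzwq, hyz⟩ := edist_le_length_or_exists_adj q
  · exact (hadj hxy.symm).trans (by gcongr)
  · have hne : y ≠ z := by
      rintro rfl
      rw [hM hzw hxy.symm, Sym2.eq_swap] at hzwq
      exact hq hzwq
    calc g ≤ G.edist y z + 1 + 1 := by
          rw [add_assoc, one_add_one_eq_two]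
          exact hfar ⟨x, hxy.symm⟩ ⟨w, hzw⟩ hne
      _ ≤ q.length + 1 := by gcongr

/-- The bipartite graph on `V` whose edges join each `x : A` to `e x : B`; it is a perfect matching
between `A` and `B` when these are disjoint. -/
def equivGraph {A B : Set V} (e : A ≃ B) : SimpleGraph V :=
  fromRel fun x y => ∃ h : x ∈ A, (e ⟨x, h⟩ : V) = y

variable {A B : Set V} {e : A ≃ B} {x y z : V}

lemma equivGraph_symm (e : A ≃ B) : equivGraph e.symm = equivGraph e := by
  have key {A B : Set V} (e : A ≃ B) : equivGraph e.symm ≤ equivGraph e := by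
    rintro x y ⟨hne, ⟨h, rfl⟩ | ⟨h, rfl⟩⟩
    · exact ⟨hne, Or.inr ⟨Subtype.coe_prop _, by simp⟩⟩
    · exact ⟨hne, Or.inl ⟨Subtype.coe_prop _, by simp⟩⟩
  exact (key e).antisymm (by simpa using key e.symm)

lemma mem_of_equivGraph_adj (h : (equivGraph e).Adj x y) : x ∈ A ∧ y ∈ B ∨ x ∈ B ∧ y ∈ A := by
  obtain ⟨-, ⟨hx, rfl⟩ | ⟨hy, rfl⟩⟩ := h
  · exact Or.inl ⟨hx, Subtype.coe_prop _⟩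
  · exact Or.inr ⟨Subtype.coe_prop _, hy⟩

lemma neighborSet_equivGraph (hAB : Disjoint A B) (e : A ≃ B) (x : A) :
    (equivGraph e).neighborSet x = {(e x : V)} := by
  ext y
  constructor
  · rintro ⟨-, ⟨-, rfl⟩ | ⟨hy, hxy⟩⟩
    · rfl
    · exact (hAB.ne_of_mem x.2 (e ⟨y, hy⟩).2 hxy.symm).elim
  · rintro rfl
    exact ⟨hAB.ne_of_mem x.2 (e x).2, Or.inl ⟨x.2, rfl⟩⟩

lemma eq_of_equivGraph_adj (hAB : Disjoint A B) (hy : (equivGraph e).Adj x y)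
    (hz : (equivGraph e).Adj x z) : y = z := by
  have key {A B : Set V} (hAB : Disjoint A B) (e : A ≃ B) (hx : x ∈ A)
      (hy : (equivGraph e).Adj x y) (hz : (equivGraph e).Adj x z) : y = z := by
    rw [← mem_neighborSet, neighborSet_equivGraph hAB e ⟨x, hx⟩, Set.mem_singleton_iff] at hy hz
    rw [hy, hz]
  obtain ⟨hx, -⟩ | ⟨hx, -⟩ := mem_of_equivGraph_adj hy
  · exact key hAB e hx hy hz
  · rw [← equivGraph_symm] at hy hz
    exact key hAB.symm e.symm hx hy hz

end Matching

section Splice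

variable {V : Type*} {G : SimpleGraph V} {s : Set V} {u v : V}

lemma exists_walk_length_eq_edist_induce {y z : s} (h : (G.induce s).edist y z ≠ ⊤) :
    ∃ w : G.Walk y z, (∀ x ∈ w.support, x ∈ s) ∧ w.length = (G.induce s).edist y z := by
  obtain ⟨w, hw⟩ := exists_walk_of_edist_ne_top h
  have hsupp : ∀ x ∈ (w.map (Embedding.induce s).toHom).support, x ∈ s := by
    rw [Walk.support_map, List.forall_mem_map]
    exact fun x _ => x.2
  exact ⟨_, hsupp, hw ▸ congrArg _ (Walk.length_map _ w)⟩

lemma egirth_le_edist_induce_add_two (hu : u ∉ s) {y z : s} (hy : G.Adj u y) (hz : G.Adj u z)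
    (hyz : y ≠ z) : G.egirth ≤ (G.induce s).edist y z + 2 := by
  obtain htop | htop := eq_or_ne ((G.induce s).edist y z) ⊤
  · simp [htop]
  obtain ⟨w, hws, hw⟩ := exists_walk_length_eq_edist_induce htop
  let p : G.Walk y u := w.concat hz.symm
  have hp : s(u, (y : V)) ∉ p.edges := by
    rw [Walk.edges_concat, List.concat_eq_append, List.mem_append, List.mem_singleton]
    rintro (h | h)
    · exact hu (hws u (w.fst_mem_support_of_mem_edges h))
    · exact hyz (Subtype.ext (Sym2.congr_right.1 (h.trans Sym2.eq_swap)))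
  calc G.egirth ≤ p.length + 1 := egirth_le_length_add_one hy p hp
    _ = (G.induce s).edist y z + 2 := by
      rw [← hw, Walk.length_concat]
      push_cast
      rw [add_assoc, one_add_one_eq_two]

lemma edist_le_edist_induce_add_two {y z : s} (hy : G.Adj u y) (hz : G.Adj v z) :
    G.edist u v ≤ (G.induce s).edist y z + 2 := by
  obtain htop | htop := eq_or_ne ((G.induce s).edist y z) ⊤
  · simp [htop]
  obtain ⟨w, -, hw⟩ := exists_walk_length_eq_edist_induce htop
  calc G.edist u v ≤ (Walk.cons hy (w.concat hz.symm)).length := edist_le _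
    _ = (G.induce s).edist y z + 2 := by
      rw [← hw, Walk.length_cons, Walk.length_concat]
      push_cast
      rw [add_assoc, one_add_one_eq_two]

/-- The Erdős–Sachs surgery: delete the vertices `u` and `v` and join every orphaned neighbour `x`
of `u` to the neighbour `e x` of `v`. -/
def splice (e : G.neighborSet u ≃ G.neighborSet v) :
    SimpleGraph ({u, v}ᶜ : Set V) :=
  (G ⊔ equivGraph e).induce {u, v}ᶜ

lemma disjoint_neighborSet (h : 2 < G.edist u v) :
    Disjoint (G.neighborSet u) (G.neighborSet v) :=
  Set.disjoint_left.2 fun _ hu hv => h.not_ge (edist_le (Walk.cons hu hv.symm.toWalk))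

lemma le_egirth_splice (e : G.neighborSet u ≃ G.neighborSet v) {g : ℕ} (hg : g ≤ G.egirth)
    (hdist : g < G.edist u v) (h2 : 2 < G.edist u v) : g ≤ (splice e).egirth := by
  have hdist' : (g : ℕ∞) + 1 ≤ G.edist u v := Order.add_one_le_of_lt hdist
  have hcross {y z : ({u, v}ᶜ : Set V)} (hy : G.Adj u y) (hz : G.Adj v z) :
      (g : ℕ∞) + 1 ≤ (G.induce {u, v}ᶜ).edist y z + 2 :=
    hdist'.trans (edist_le_edist_induce_add_two hy hz)
  have hu : u ∉ ({u, v}ᶜ : Set V) := by simp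
  have hv : v ∉ ({u, v}ᶜ : Set V) := by simp
  refine le_egirth_sup (G := G.induce {u, v}ᶜ) (M := (equivGraph e).induce {u, v}ᶜ)
    (hg.trans (Embedding.induce _).isContained.egirth_le) ?_ ?_ ?_
  · exact fun x y z hy hz => Subtype.ext (eq_of_equivGraph_adj (disjoint_neighborSet h2) hy hz)
  · rintro y ⟨y', hy⟩ z ⟨z', hz⟩ hne
    obtain ⟨hy, -⟩ | ⟨hy, -⟩ := mem_of_equivGraph_adj hy <;>
      obtain ⟨hz, -⟩ | ⟨hz, -⟩ := mem_of_equivGraph_adj hz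
    · exact hg.trans (egirth_le_edist_induce_add_two hu hy hz hne)
    · exact le_self_add.trans (hcross hy hz)
    · rw [edist_comm]
      exact le_self_add.trans (hcross hz hy)
    · exact hg.trans (egirth_le_edist_induce_add_two hv hy hz hne)
  · intro x y hxy
    rw [← ENat.add_le_add_iff_right ENat.one_ne_top, add_assoc, one_add_one_eq_two]
    obtain ⟨hx, hy⟩ | ⟨hx, hy⟩ := mem_of_equivGraph_adj hxy
    · exact hcross hx hy
    · rw [edist_comm]
      exact hcross hy hx

lemma ncard_neighborSet_sup_equivGraph_sdiff_of_adj (e : G.neighborSet u ≃ G.neighborSet v)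
    (h3 : 3 < G.edist u v) {x : V} (hux : G.Adj u x) :
    ((G ⊔ equivGraph e).neighborSet x \ {u, v}).ncard = (G.neighborSet x).ncard := by
  have hwalk (p : G.Walk u v) : 3 < p.length := by exact_mod_cast h3.trans_le (edist_le p)
  have hdisj : Disjoint (G.neighborSet u) (G.neighborSet v) :=
    disjoint_neighborSet (lt_trans (by norm_num) h3)
  let x' : V := e ⟨x, hux⟩
  have hvx' : G.Adj v x' := (e ⟨x, hux⟩).2
  have hvx : ¬ G.Adj v x := fun h => Set.disjoint_left.1 hdisj hux h
  have hx'u : x' ≠ u := fun h => by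
    simpa using hwalk ((h ▸ hvx' : G.Adj v u).symm.toWalk)
  have hxx' : ¬ G.Adj x x' := fun h => by
    simpa using hwalk (.cons hux (.cons h hvx'.symm.toWalk))
  have hset : (G ⊔ equivGraph e).neighborSet x \ {u, v} =
      insert x' (G.neighborSet x \ {u}) := by
    rw [neighborSet_sup, neighborSet_equivGraph hdisj e ⟨x, hux⟩]
    ext y
    simp only [Set.mem_sdiff, Set.mem_union, mem_neighborSet, Set.mem_singleton_iff,
      Set.mem_insert_iff]
    have := hvx'.ne
    grind [G.adj_comm]
  rw [hset]
  exact Set.ncard_exchange hxx' hux.symm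

lemma ncard_neighborSet_sup_equivGraph_sdiff (e : G.neighborSet u ≃ G.neighborSet v)
    (h3 : 3 < G.edist u v) (x : V) :
    ((G ⊔ equivGraph e).neighborSet x \ {u, v}).ncard = (G.neighborSet x).ncard := by
  by_cases hux : G.Adj u x
  · exact ncard_neighborSet_sup_equivGraph_sdiff_of_adj e h3 hux
  by_cases hvx : G.Adj v x
  · rw [← equivGraph_symm, Set.pair_comm]
    rw [edist_comm] at h3
    exact ncard_neighborSet_sup_equivGraph_sdiff_of_adj e.symm h3 hvx
  · congr 1
    ext y
    have hM : ¬ (equivGraph e).Adj x y := fun h =>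
      (mem_of_equivGraph_adj h).elim (fun h => hux h.1) fun h => hvx h.1
    simp only [Set.mem_sdiff, mem_neighborSet, sup_adj, Set.mem_insert_iff, Set.mem_singleton_iff]
    grind [G.adj_comm]

lemma isRegularOfDegree_splice [LocallyFinite G] (e : G.neighborSet u ≃ G.neighborSet v)
    [LocallyFinite (splice e)] (h3 : 3 < G.edist u v) {k : ℕ} (hG : G.IsRegularOfDegree k) :
    (splice e).IsRegularOfDegree k := fun x => by
  have himage : (G ⊔ equivGraph e).neighborSet x \ {u, v} =
      Subtype.val '' (splice e).neighborSet x := by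
    ext y
    simp [splice, and_comm]
  have hncard := ncard_neighborSet_sup_equivGraph_sdiff e h3 x
  rw [himage, Set.ncard_image_of_injective _ Subtype.val_injective] at hncard
  rw [← hG x, ← card_neighborSet_eq_degree, ← card_neighborSet_eq_degree,
    ← Nat.card_eq_fintype_card, ← Nat.card_eq_fintype_card, Nat.card_coe_set_eq,
    Nat.card_coe_set_eq, hncard]

lemma exists_isRegularOfDegree_ediam_le {k g : ℕ} (hk : k ≠ 0) (hg : 3 ≤ g) (V : Type u)
    [Fintype V] [Nonempty V] (G : SimpleGraph V) (hreg : G.IsRegularOfDegree k)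
    (hG : g ≤ G.egirth) :
    ∃ (W : Type u) (_ : Fintype W) (_ : Nonempty W) (H : SimpleGraph W),
      H.IsRegularOfDegree k ∧ g ≤ H.egirth ∧ H.ediam ≤ g := by
  induction h : Fintype.card V using Nat.strong_induction_on generalizing V with
  | _ m ih =>
    by_cases hdiam : G.ediam ≤ g
    · exact ⟨V, inferInstance, inferInstance, G, hreg, hG, hdiam⟩
    obtain ⟨u, v, huv⟩ : ∃ u v, g < G.edist u v := by simpa [ediam_le_iff] using hdiam
    have h3 : 3 < G.edist u v := lt_of_le_of_lt (by exact_mod_cast hg) huv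
    have hcard : Fintype.card (G.neighborSet u) = Fintype.card (G.neighborSet v) := by
      rw [card_neighborSet_eq_degree, card_neighborSet_eq_degree, hreg u, hreg v]
    let e := Fintype.equivOfCardEq hcard
    obtain ⟨y, huy⟩ : ∃ y, G.Adj u y :=
      (G.degree_pos_iff_exists_adj u).1 (by rw [hreg u]; exact hk.pos)
    have hyv : y ≠ v := by
      rintro rfl
      exact h3.not_ge (edist_eq_one_iff_adj.2 huy ▸ by norm_num)
    have : Nonempty ({u, v}ᶜ : Set V) := ⟨y, by simp [huy.ne', hyv]⟩
    exact ih _ (h ▸ Fintype.card_subtype_lt (x := u) (by simp)) _ (splice e)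
      (isRegularOfDegree_splice e h3 hreg)
      (le_egirth_splice e hG huv (lt_trans (by norm_num) h3)) rfl

end Splice

section L1

lemma norm_sum_single_sub_sum_single {α : Type*} [DecidableEq α] (s t : Finset α) :
    ‖∑ n ∈ s, lp.single (E := fun _ : α => ℝ) 1 n 1 - ∑ n ∈ t, lp.single 1 n 1‖ = #(s ∆ t) := by
  let sign (n : α) : ℝ := if n ∈ s then 1 else -1
  have hsub : ∑ n ∈ s, lp.single (E := fun _ : α => ℝ) 1 n 1 - ∑ n ∈ t, lp.single 1 n 1 =
      ∑ n ∈ s ∆ t, lp.single 1 n (sign n) := by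
    rw [← Finset.sum_sdiff_sub_sum_sdiff, symmDiff_def, Finset.sup_eq_union,
      Finset.sum_union disjoint_sdiff_sdiff, sub_eq_add_neg, ← Finset.sum_neg_distrib]
    congr 1 <;> refine Finset.sum_congr rfl fun n hn => ?_
    · simp only [sign, if_pos (Finset.mem_sdiff.1 hn).1]
    · simp only [sign, if_neg (Finset.mem_sdiff.1 hn).2, lp.single_neg]
  have hsign (n : α) : ‖sign n‖ = 1 := by
    simp only [sign]
    split_ifs <;> simp
  have hnorm := lp.norm_sum_single (p := 1) (by norm_num) sign (s ∆ t)
  simpa [hsub, hsign] using hnorm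

lemma exists_l1_norm_sub_eq_card_symmDiff (ι : Type*) [Countable ι] [DecidableEq ι] :
    ∃ φ : Finset ι → lp (fun _ : ℕ => ℝ) 1, ∀ s t, ‖φ s - φ t‖ = #(s ∆ t) := by
  obtain ⟨enc, henc⟩ := exists_injective_nat ι
  refine ⟨fun s => ∑ n ∈ s.image enc, lp.single 1 n 1, fun s t => ?_⟩
  rw [norm_sum_single_sub_sum_single, ← Finset.image_symmDiff _ _ henc,
    Finset.card_image_of_injective _ henc]

lemma l1Distortion_le {W ι : Type*} [Countable ι] [DecidableEq ι] {G : SimpleGraph W}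
    (f : W → Finset ι) {C : ℝ} (hC : 0 < C) (hle : ∀ u v, #(f u ∆ f v) ≤ G.dist u v)
    (hge : ∀ u v, G.dist u v ≤ C * #(f u ∆ f v)) : l1Distortion G ≤ C := by
  rw [l1Distortion]
  set S := {C : ℝ | ∃ (φ : W → lp (fun _ : ℕ => ℝ) 1) (r : ℝ), 0 < r ∧
    ∀ u v : W, r * G.dist u v ≤ ‖φ u - φ v‖ ∧ ‖φ u - φ v‖ ≤ r * C * G.dist u v}
  -- `S` is unbounded below when all distances in `G` vanish, and then `sInf S = 0`.
  by_cases hS : BddBelow S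
  · obtain ⟨φ, hφ⟩ := exists_l1_norm_sub_eq_card_symmDiff ι
    refine csInf_le hS ⟨φ ∘ f, C⁻¹, inv_pos.2 hC, fun u v => ?_⟩
    rw [Function.comp_apply, Function.comp_apply, hφ, inv_mul_cancel₀ hC.ne', one_mul]
    exact ⟨(inv_mul_le_iff₀ hC).2 (hge u v), by exact_mod_cast hle u v⟩
  · rw [Real.sInf_of_not_bddBelow hS]
    exact hC.le

lemma l1Distortion_homologyCover_component_le {V : Type*} [Countable V] {G : SimpleGraph V} {K : ℕ}
    (hK : G.ediam ≤ K * G.egirth) (C : (homologyCover G).ConnectedComponent) :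
    l1Distortion C.toSimpleGraph ≤ 2 * K + 1 := by
  have hreach (x y : C) : (homologyCover G).Reachable x y := C.reachable_of_mem_supp x.2 y.2
  refine l1Distortion_le (fun x : C => x.1.2) (by positivity) (fun x y => ?_) fun x y => ?_
  · rw [dist_toSimpleGraph]
    exact homologyCover.card_symmDiff_le_dist (hreach x y)
  · rw [dist_toSimpleGraph]
    exact_mod_cast homologyCover.dist_le_mul_card_symmDiff hK (hreach x y)

end L1

theorem exists_regular_graphs_large_girth_bounded_l1_distortion_general {k : ℕ} (hk : k ≠ 0)
    (n : ℕ) :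
    ∃ (V : Type) (_ : Fintype V) (G : SimpleGraph V),
      G.Connected ∧ G.IsRegularOfDegree k ∧ (n : ℕ∞) ≤ G.egirth ∧ l1Distortion G ≤ 3 := by
  obtain ⟨V, _, _, G₀, hreg₀, hg₀⟩ := exists_isRegularOfDegree_le_egirth k (n + 3)
  obtain ⟨W, _, _, G, hreg, hg, hdiam⟩ :=
    exists_isRegularOfDegree_ediam_le hk (Nat.le_add_left 3 n) V G₀ hreg₀ hg₀
  have hK : G.ediam ≤ (1 : ℕ) * G.egirth := by
    rw [Nat.cast_one, one_mul]
    exact hdiam.trans hg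
  obtain ⟨x⟩ : Nonempty (W × Finset (Sym2 W)) := inferInstance
  let C := (homologyCover G).connectedComponentMk x
  refine ⟨C, inferInstance, C.toSimpleGraph, C.connected_toSimpleGraph,
    (isCovering_toSimpleGraph_hom C).isRegularOfDegree
      (homologyCover.isCovering_proj.isRegularOfDegree hreg), ?_, ?_⟩
  · calc (n : ℕ∞) ≤ (n + 3 : ℕ) := by exact_mod_cast Nat.le_add_right n 3
      _ ≤ G.egirth := hg
      _ ≤ 2 * G.egirth := by rw [two_mul]; exact le_self_add
      _ ≤ (homologyCover G).egirth := homologyCover.two_mul_egirth_le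
      _ ≤ C.toSimpleGraph.egirth := (Embedding.induce C.supp).isContained.egirth_le
  · calc l1Distortion C.toSimpleGraph ≤ 2 * (1 : ℕ) + 1 :=
          l1Distortion_homologyCover_component_le hK C
      _ = 3 := by norm_num

/-- There exist an integer `k ≥ 3` and a constant `D < ∞` such that for every `n` there is
a finite connected `k`-regular simple graph `G` with `girth(G) ≥ n` and `c₁(G) ≤ D`. -/
theorem exists_regular_graphs_large_girth_bounded_l1_distortion :
    ∃ k : ℕ, 3 ≤ k ∧ ∃ D : ℝ, ∀ n : ℕ,
      ∃ (V : Type) (_ : Fintype V) (G : SimpleGraph V),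
        G.Connected ∧ G.IsRegularOfDegree k ∧ (n : ℕ∞) ≤ G.egirth ∧
          l1Distortion G ≤ D :=
  ⟨3, le_rfl, 3, exists_regular_graphs_large_girth_bounded_l1_distortion_general three_ne_zero⟩

end
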